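/- Let d ≥ 1, fix k ∈ {1,…,d}, and let Δ assign to every d-tuple P = (p⁽¹⁾,…,p⁽ᵈ⁾) of finite vectors with nonnegative entries of a common length, whose columns share a common support, a real number Δ(P), invariantly under simultaneous permutation of the rows and under appending all-zero rows, such that Δ(P ⊞ Q) = Δ(P) + Δ(Q), the Leibniz rule Δ(P ⊠ Q) = Δ(P)·‖q⁽ᵏ⁾‖₁ + ‖p⁽ᵏ⁾‖₁·Δ(Q) holds for all P, Q, and Δ is monotone in the sense that if there is a stochastic matrix T with T p⁽ˡ⁾ = q⁽ˡ⁾ for all ℓ = 1,…,d then Δ(P) ≥ Δ(Q). Then there exist γ_ℓ ≥ 0 (ℓ ≠ k) such that for every tuple P with ‖p⁽ᵏ⁾‖₁ ∈ ℚ one has Δ(P) = Σ_{ℓ≠k} γ_ℓ · Σ_{i∈I} p_i⁽ᵏ⁾ log( p_i⁽ᵏ⁾ / p_i⁽ˡ⁾ ), with I the common support. Conversely, for any γ_ℓ ≥ 0 this formula defines a map with all of the listed properties. -/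

import Mathlib

open scoped BigOperators NNReal

noncomputable section

/-- A probability vector on a finite index type. -/
def IsProbVec {ι : Type*} [Fintype ι] (p : ι → ℝ) : Prop :=
  (∀ i, 0 ≤ p i) ∧ ∑ i, p i = 1

/-- A (column-)stochastic matrix: nonnegative entries, every column sums to `1`. -/
def IsStochastic {ι κ : Type*} [Fintype ι] [Fintype κ] (T : ι → κ → ℝ) : Prop :=
  (∀ i j, 0 ≤ T i j) ∧ ∀ j, ∑ i, T i j = 1

/-- Matrix–vector multiplication. -/
def matVec {ι κ : Type*} [Fintype κ] (T : ι → κ → ℝ) (v : κ → ℝ) : ι → ℝ :=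
  fun i => ∑ j, T i j * v j

/-- Kronecker product of two vectors. -/
def kron {ι κ : Type*} (p : ι → ℝ) (q : κ → ℝ) : ι × κ → ℝ :=
  fun x => p x.1 * q x.2

/-- `n`-fold Kronecker power of a vector. -/
def kpow {ι : Type*} (p : ι → ℝ) (n : ℕ) : (Fin n → ι) → ℝ :=
  fun f => ∏ j, p (f j)

/-- Kronecker product reindexed along `Fin (m * n)`. -/
def kronFin {m n : ℕ} (p : Fin m → ℝ) (q : Fin n → ℝ) : Fin (m * n) → ℝ :=
  fun i => kron p q (finProdFinEquiv.symm i)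

/-- The sum of the `k` largest entries of a nonnegative vector, expressed as the
largest sum over subsets of cardinality at most `k`. -/
def topSum {ι : Type*} [Fintype ι] (p : ι → ℝ) (k : ℕ) : ℝ :=
  ⨆ s ∈ {s : Finset ι | s.card ≤ k}, ∑ i ∈ s, p i

/-- Majorization for nonnegative vectors (possibly of different lengths):
equal total sums, and for each `k` the sum of the `k` largest entries of `p` is
at least that of `q`. -/
def Majorizes {ι κ : Type*} [Fintype ι] [Fintype κ] (p : ι → ℝ) (q : κ → ℝ) : Prop :=
  (∑ i, p i = ∑ j, q j) ∧ ∀ k : ℕ, topSum q k ≤ topSum p k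

/-- The size of the support, `‖p‖₀`. -/
def supp0 {ι : Type*} [Fintype ι] (p : ι → ℝ) : ℕ :=
  (Finset.univ.filter fun i => p i ≠ 0).card

/-- Entrywise nonnegativity. -/
def NonnegVec {n : ℕ} (p : Fin n → ℝ) : Prop := ∀ i, 0 ≤ p i

/-- The modified majorization preorder `≽₀,₁`: majorization plus equality of
support sizes. -/
def MajMod {ι κ : Type*} [Fintype ι] [Fintype κ] (p : ι → ℝ) (q : κ → ℝ) : Prop :=
  Majorizes p q ∧ supp0 p = supp0 q

/-- `f_α(p) = ∑_{i ∈ supp p} (p i)^α`. -/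
def fA {ι : Type*} [Fintype ι] (α : ℝ) (p : ι → ℝ) : ℝ :=
  ∑ i, if p i = 0 then 0 else p i ^ α

/-- Shannon entropy (the terms with `p i = 0` vanish). -/
def H1ent {ι : Type*} [Fintype ι] (p : ι → ℝ) : ℝ := -∑ i, p i * Real.log (p i)

/-- `H₀'(p) = ∑_{i ∈ supp p} log p_i`. -/
def H0' {ι : Type*} [Fintype ι] (p : ι → ℝ) : ℝ :=
  ∑ i, if p i = 0 then 0 else Real.log (p i)

/-- Rényi entropy of order `α` (with `α = 1` the Shannon entropy). -/
def Hent {ι : Type*} [Fintype ι] (α : ℝ) (p : ι → ℝ) : ℝ :=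
  if α = 1 then -∑ i, p i * Real.log (p i)
  else (1 / (1 - α)) * Real.log (∑ i, if p i = 0 then 0 else p i ^ α)

/-- Min-entropy `H_∞(p) = - log max_i p_i`. -/
def HentInf {ι : Type*} [Fintype ι] (p : ι → ℝ) : ℝ := -Real.log (⨆ i, p i)

/-- Kullback–Leibler divergence (the terms with `p i = 0` vanish). -/
def KL {n : ℕ} (p q : Fin n → ℝ) : ℝ :=
  ∑ i, p i * Real.log (p i / q i)

/-- Rényi divergence of order `α` for vectors with common support. -/
def Renyi {n : ℕ} (α : ℝ) (p q : Fin n → ℝ) : ℝ :=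
  if α = 1 then ∑ i, p i * Real.log (p i / q i)
  else (1 / (α - 1)) * Real.log (∑ i, if p i = 0 then 0 else p i ^ α * q i ^ (1 - α))

/-- Max-divergence `D_∞(p‖q) = max_{i ∈ supp q} log (p_i / q_i)`. -/
def RenyiInf {n : ℕ} (p q : Fin n → ℝ) : ℝ :=
  ⨆ i ∈ Finset.univ.filter (fun i => q i ≠ 0), Real.log (p i / q i)

/-- Rényi divergence with values in the extended reals `[0, ∞]`. -/
def RenyiE {n : ℕ} (α : ℝ) (p q : Fin n → ℝ) : EReal :=
  if α = 1 then
    (if ∀ i, p i ≠ 0 → q i ≠ 0 then ((∑ i, p i * Real.log (p i / q i) : ℝ) : EReal) else ⊤)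
  else if α < 1 then
    (if ∃ i, p i ≠ 0 ∧ q i ≠ 0 then
      (((1 / (α - 1)) *
        Real.log (∑ i, if p i = 0 ∨ q i = 0 then 0 else p i ^ α * q i ^ (1 - α)) : ℝ) : EReal)
    else (⊤ : EReal))
  else
    (if ∀ i, p i ≠ 0 → q i ≠ 0 then
      (((1 / (α - 1)) *
        Real.log (∑ i, if p i = 0 then 0 else p i ^ α * q i ^ (1 - α)) : ℝ) : EReal)
    else (⊤ : EReal))

/-- The common support of a tuple of vectors. -/
def suppIdx {d n : ℕ} (P : Fin d → Fin n → ℝ) : Finset (Fin n) :=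
  Finset.univ.filter fun i => ∃ k, P k i ≠ 0

/-- `f_α(P) = ∑_{i ∈ I} ∏_k (p_i^{(k)})^{α_k}` with `I` the common support. -/
def fMat {d n : ℕ} (α : Fin d → ℝ) (P : Fin d → Fin n → ℝ) : ℝ :=
  ∑ i ∈ suppIdx P, ∏ k, P k i ^ α k

/-- The matrix `α`-divergence `D_α`. -/
def Dmat {d n : ℕ} (α : Fin d → ℝ) (P : Fin d → Fin n → ℝ) : ℝ :=
  (1 / ((⨆ k, α k) - 1)) * Real.log (∑ i ∈ suppIdx P, ∏ k, P k i ^ α k)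

/-- The tropical matrix divergence `D^𝕋_β`. -/
def DmatT {d n : ℕ} (β : Fin d → ℝ) (P : Fin d → Fin n → ℝ) : ℝ :=
  (1 / (⨆ k, β k)) * Real.log (⨆ i ∈ suppIdx P, ∏ k, P k i ^ β k)

/-- Membership in `A₊`: entries summing to `1`, all nonnegative. -/
def memAplus {d : ℕ} (α : Fin d → ℝ) : Prop := (∑ k, α k = 1) ∧ ∀ k, 0 ≤ α k

/-- Membership in `A₋`: entries summing to `1`, one entry `≥ 1`, the others `≤ 0`. -/
def memAminus {d : ℕ} (α : Fin d → ℝ) : Prop :=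
  (∑ k, α k = 1) ∧ ∃ k, 1 ≤ α k ∧ ∀ l, l ≠ k → α l ≤ 0

/-- Membership in `B₋`: entries summing to `0`, one entry `≥ 0`, the others `≤ 0`. -/
def memBminus {d : ℕ} (β : Fin d → ℝ) : Prop :=
  (∑ k, β k = 0) ∧ ∃ k, 0 ≤ β k ∧ ∀ l, l ≠ k → β l ≤ 0

/-- `α` is none of the standard basis vectors `e₁, …, e_d`. -/
def notBasis {d : ℕ} (α : Fin d → ℝ) : Prop := ∀ k, α ≠ Pi.single k 1

/-- ℓ¹-distance of two vectors, padding with zeros to a common length. -/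
def l1PadDist {m n : ℕ} (p : Fin m → ℝ) (q : Fin n → ℝ) : ℝ :=
  ∑ i : Fin (max m n),
    |(if h : (i : ℕ) < m then p ⟨(i : ℕ), h⟩ else 0) -
      (if h : (i : ℕ) < n then q ⟨(i : ℕ), h⟩ else 0)|

/-- Index type of the direct sum `⨁_{s=0}^{n-1} p^{⊗(n-1-s)} ⊗ q^{⊗s}`. -/
abbrev TrickIdx (m m' n : ℕ) : Type :=
  Σ s : Fin n, (Fin (n - 1 - (s : ℕ)) → Fin m) × (Fin (s : ℕ) → Fin m')

/-- The standard catalyst `(1/n) ⨁_{s=0}^{n-1} p^{⊗(n-1-s)} ⊗ q^{⊗s}`. -/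
def trick {m m' : ℕ} (p : Fin m → ℝ) (q : Fin m' → ℝ) (n : ℕ) : TrickIdx m m' n → ℝ :=
  fun x => (1 / (n : ℝ)) * (kpow p (n - 1 - (x.1 : ℕ)) x.2.1 * kpow q (x.1 : ℕ) x.2.2)

/-- A valid tuple: nonnegative entries and common support across the tuple. -/
def TupOK {d n : ℕ} (P : Fin d → Fin n → ℝ) : Prop :=
  (∀ k i, 0 ≤ P k i) ∧ ∀ k l i, P k i ≠ 0 ↔ P l i ≠ 0

/-- Matrix majorization of tuples: a single stochastic matrix carrying each column
of `P` to the corresponding column of `Q`. -/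
def TupMaj {d m n : ℕ} (P : Fin d → Fin m → ℝ) (Q : Fin d → Fin n → ℝ) : Prop :=
  ∃ T : Fin n → Fin m → ℝ, IsStochastic T ∧ ∀ k, matVec T (P k) = Q k

/-- The basic properties of a monotone derivation at the `k`-th column
normalization on tuples of finite nonnegative vectors with common support:
invariance under simultaneous row permutations and appending an all-zero row,
additivity under `⊞`, the Leibniz rule with respect to `‖·‖₁` of the `k`-th
column under `⊠`, and antitonicity under matrix majorization. -/
def MDeltaBase {d : ℕ} (k : Fin d) (Δ : ∀ n : ℕ, (Fin d → Fin n → ℝ) → ℝ) : Prop :=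
  (∀ (n : ℕ) (σ : Equiv.Perm (Fin n)) (P : Fin d → Fin n → ℝ), TupOK P →
    Δ n (fun l => P l ∘ σ) = Δ n P) ∧
  (∀ (n : ℕ) (P : Fin d → Fin n → ℝ), TupOK P →
    Δ (n + 1) (fun l => Fin.snoc (P l) 0) = Δ n P) ∧
  (∀ (m n : ℕ) (P : Fin d → Fin m → ℝ) (Q : Fin d → Fin n → ℝ),
    TupOK P → TupOK Q →
    Δ (m + n) (fun l => Fin.append (P l) (Q l)) = Δ m P + Δ n Q) ∧
  (∀ (m n : ℕ) (P : Fin d → Fin m → ℝ) (Q : Fin d → Fin n → ℝ),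
    TupOK P → TupOK Q →
    Δ (m * n) (fun l => kronFin (P l) (Q l)) =
      Δ m P * (∑ j, Q k j) + (∑ i, P k i) * Δ n Q) ∧
  (∀ (m n : ℕ) (P : Fin d → Fin m → ℝ) (Q : Fin d → Fin n → ℝ),
    TupOK P → TupOK Q → TupMaj P Q → Δ n Q ≤ Δ m P)

/-!
Additivity reduces a monotone derivation `Δ` to its values `φ x` on single rows `x`. On rows with
positive entries the Leibniz rule says that the logarithmic derivative `φ x / x k` is additive in
`log x`, so it is a sum over the columns `l` of additive functions of `log (x l)`. Merging the rows
that carry `exp u` and `exp (-u)` in column `l ≠ k`, and `1` elsewhere, shows that the `l`-th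
summand is nonpositive at `log (cosh u)`, hence on `[0, ∞)`; an additive function with this property
is `t ↦ -γ l * t` with `γ l ≥ 0`. Since splitting a constant row in proportion is reversible, `Δ`
restricts to a derivation `D` of `ℝ` on constant rows, which determines the remaining `k`-th
summand and gives `φ x = ∑ l ≠ k, γ l * x k * log (x k / x l) + D (x k)`. Every derivation of `ℝ`
vanishes on `ℚ`. Conversely, monotonicity of the Kullback–Leibler divergence is the log-sum
inequality.
-/

section Extension

lemma exists_addMonoidHom_eq_on_pos {R M : Type*} [Ring R] [LinearOrder R]
    [IsStrictOrderedRing R] [AddCommGroup M] {f : R → M}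
    (hf : ∀ s t, 0 < s → 0 < t → f (s + t) = f s + f t) :
    ∃ F : R →+ M, ∀ s, 0 < s → F s = f s := by
  have sub_eq_sub {a b c d : R} (ha : 0 < a) (hb : 0 < b) (hc : 0 < c) (hd : 0 < d)
      (h : a - b = c - d) : f a - f b = f c - f d := by
    rw [sub_eq_sub_iff_add_eq_add] at h ⊢
    rw [← hf a d ha hd, ← hf c b hc hb, h]
  have neg_part_pos (r : R) : 0 < |r| + 1 := by positivity
  have pos_part_pos (r : R) : 0 < |r| + 1 + r := by
    rw [add_right_comm]
    exact add_pos_of_nonneg_of_pos (neg_le_iff_add_nonneg'.mp (neg_abs_le r)) one_pos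
  refine ⟨AddMonoidHom.mk' (fun r => f (|r| + 1 + r) - f (|r| + 1)) fun r s => ?_, fun s hs => ?_⟩
  · rw [sub_add_sub_comm, ← hf _ _ (pos_part_pos r) (pos_part_pos s),
      ← hf _ _ (neg_part_pos r) (neg_part_pos s)]
    exact sub_eq_sub (pos_part_pos _) (neg_part_pos _)
      (add_pos (pos_part_pos r) (pos_part_pos s)) (add_pos (neg_part_pos r) (neg_part_pos s))
      (by abel)
  · rw [AddMonoidHom.mk'_apply, hf _ _ (neg_part_pos s) hs, add_sub_cancel_left]

lemma exists_derivation_eq_on_pos {K : Type*} [Field K] [LinearOrder K] [IsStrictOrderedRing K]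
    {f : K → K} (hadd : ∀ s t, 0 < s → 0 < t → f (s + t) = f s + f t)
    (hmul : ∀ s t, 0 < s → 0 < t → f (s * t) = f s * t + s * f t) :
    ∃ D : Derivation ℚ K K, ∀ s, 0 < s → D s = f s := by
  obtain ⟨F, hF⟩ := exists_addMonoidHom_eq_on_pos hadd
  have leibniz_pos {s t : K} (hs : 0 < s) (ht : 0 < t) : F (s * t) = s * F t + t * F s := by
    rw [hF _ (mul_pos hs ht), hF s hs, hF t ht, hmul s t hs ht]
    ring
  have exists_pos_sub (r : K) : ∃ s t, 0 < s ∧ 0 < t ∧ r = s - t :=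
    ⟨|r| + 1 + r, |r| + 1, by linarith [neg_abs_le r], by positivity, by ring⟩
  refine ⟨Derivation.mk' F.toRatLinearMap fun a b => ?_, hF⟩
  obtain ⟨s, t, hs, ht, rfl⟩ := exists_pos_sub a
  obtain ⟨u, v, hu, hv, rfl⟩ := exists_pos_sub b
  change F ((s - t) * (u - v)) = (s - t) * F (u - v) + (u - v) * F (s - t)
  simp only [sub_mul, mul_sub, map_sub, leibniz_pos hs hu, leibniz_pos hs hv, leibniz_pos ht hu,
    leibniz_pos ht hv]
  ring

end Extension

/-- The properties of `x ↦ Δ(x)` on single rows `x` with positive entries that determine a monotone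
derivation `Δ` at the `k`-th column normalization: the Leibniz rule, monotonicity under merging two
rows, and reversibility of merging for constant rows. -/
structure IsMonotoneRowDerivation {ι : Type*} (k : ι) (φ : (ι → ℝ) → ℝ) : Prop where
  map_mul : ∀ x y : ι → ℝ, (∀ l, 0 < x l) → (∀ l, 0 < y l) → φ (x * y) = φ x * y k + x k * φ y
  map_add_le : ∀ x y : ι → ℝ, (∀ l, 0 < x l) → (∀ l, 0 < y l) → φ (x + y) ≤ φ x + φ y
  map_const_add : ∀ s t : ℝ, 0 < s → 0 < t →
    φ (fun _ => s + t) = φ (fun _ => s) + φ (fun _ => t)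

namespace IsMonotoneRowDerivation

variable {ι : Type*} {k : ι} {φ : (ι → ℝ) → ℝ}

lemma exists_derivation (hφ : IsMonotoneRowDerivation k φ) :
    ∃ D : Derivation ℚ ℝ ℝ, ∀ s, 0 < s → φ (fun _ => s) = D s := by
  obtain ⟨D, hD⟩ := exists_derivation_eq_on_pos (f := fun s => φ fun _ => s) hφ.map_const_add
    fun s t hs ht => hφ.map_mul (fun _ => s) (fun _ => t) (fun _ => hs) fun _ => ht
  exact ⟨D, fun s hs => (hD s hs).symm⟩

/-- The logarithmic derivative `φ x / x k` in the coordinates `x = exp u`, in which the Leibniz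
rule becomes additivity. -/
def logDerivHom (hφ : IsMonotoneRowDerivation k φ) : (ι → ℝ) →+ ℝ :=
  AddMonoidHom.mk' (fun u => φ (fun l => Real.exp (u l)) / Real.exp (u k)) fun u v => by
    have hexp : (fun l => Real.exp ((u + v) l)) =
        (fun l => Real.exp (u l)) * fun l => Real.exp (v l) :=
      funext fun l => Real.exp_add (u l) (v l)
    rw [hexp, hφ.map_mul _ _ (fun l => Real.exp_pos _) fun l => Real.exp_pos _, Pi.add_apply,
      Real.exp_add]
    field_simp

lemma eq_mul_logDerivHom (hφ : IsMonotoneRowDerivation k φ) {x : ι → ℝ} (hx : ∀ l, 0 < x l) :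
    φ x = x k * hφ.logDerivHom (fun l => Real.log (x l)) := by
  simp only [logDerivHom, AddMonoidHom.mk'_apply, Real.exp_log (hx _)]
  rw [mul_div_cancel₀ _ (hx k).ne']

variable [DecidableEq ι]

lemma logDerivHom_single_nonpos (hφ : IsMonotoneRowDerivation k φ) {l : ι} (hl : l ≠ k) {v : ℝ}
    (hv : 0 ≤ v) : hφ.logDerivHom (Pi.single l v) ≤ 0 := by
  set u := Real.arcosh (Real.exp v)
  let expRow (w : ℝ) : ι → ℝ := fun j => Real.exp ((Pi.single l w : ι → ℝ) j)
  have expRow_pos (w : ℝ) (j : ι) : 0 < expRow w j := Real.exp_pos _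
  have expRow_at_k (w : ℝ) : expRow w k = 1 := by simp [expRow, hl.symm]
  have map_expRow (w : ℝ) : φ (expRow w) = hφ.logDerivHom (Pi.single l w) := by
    rw [hφ.eq_mul_logDerivHom (expRow_pos w), expRow_at_k, one_mul]
    simp only [expRow, Real.log_exp]
  have merge : expRow u + expRow (-u) = (fun _ => 2) * expRow v := by
    funext j
    rcases eq_or_ne j l with rfl | hj
    · have hcosh : Real.cosh u = Real.exp v := Real.cosh_arcosh (Real.one_le_exp hv)
      simp only [expRow, Pi.add_apply, Pi.mul_apply, Pi.single_eq_same, ← hcosh, Real.cosh_eq]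
      ring
    · norm_num [expRow, hj]
  have map_two : φ (fun _ => 2) = 0 := by
    obtain ⟨D, hD⟩ := hφ.exists_derivation
    rw [hD 2 two_pos]
    exact_mod_cast D.map_natCast 2
  have merge_le := hφ.map_add_le (expRow u) (expRow (-u)) (expRow_pos u) (expRow_pos (-u))
  rw [merge, hφ.map_mul _ _ (fun _ => two_pos) (expRow_pos v), map_two, zero_mul, zero_add,
    map_expRow, map_expRow, map_expRow, Pi.single_neg, map_neg, add_neg_cancel] at merge_le
  linarith

lemma logDerivHom_single (hφ : IsMonotoneRowDerivation k φ) {l : ι} (hl : l ≠ k) (v : ℝ) :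
    hφ.logDerivHom (Pi.single l v) = v * hφ.logDerivHom (Pi.single l 1) := by
  let F : ℝ →+ ℝ := hφ.logDerivHom.comp (AddMonoidHom.single (fun _ => ℝ) l)
  have antitone_F : Antitone F :=
    (antitone_iff_map_nonpos F).mpr fun _ hv => hφ.logDerivHom_single_nonpos hl hv
  have continuous_F : Continuous F :=
    MeasureTheory.Measure.AddMonoidHom.continuous_of_measurable F antitone_F.measurable
  simpa [F] using map_real_smul F continuous_F v 1

lemma exists_eq_sum_log_add_derivation [Fintype ι] (hφ : IsMonotoneRowDerivation k φ) :
    ∃ (γ : ι → ℝ) (D : Derivation ℚ ℝ ℝ), (∀ l, l ≠ k → 0 ≤ γ l) ∧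
      ∀ x : ι → ℝ, (∀ l, 0 < x l) →
        φ x = ∑ l ∈ Finset.univ.erase k, γ l * (x k * Real.log (x k / x l)) + D (x k) := by
  obtain ⟨D, hD⟩ := hφ.exists_derivation
  let F := hφ.logDerivHom
  refine ⟨fun l => -F (Pi.single l 1), D,
    fun l hl => neg_nonneg.mpr (hφ.logDerivHom_single_nonpos hl zero_le_one), fun x hx => ?_⟩
  have F_apply (u : ι → ℝ) : F u =
      ∑ l ∈ Finset.univ.erase k, u l * F (Pi.single l 1) + F (Pi.single k (u k)) := by
    rw [← congrArg F (Finset.univ_sum_single u), map_sum,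
      ← Finset.sum_erase_add _ _ (Finset.mem_univ k),
      Finset.sum_congr rfl fun l hl => hφ.logDerivHom_single (Finset.ne_of_mem_erase hl) (u l)]
  have map_row : φ x = x k * F fun l => Real.log (x l) := hφ.eq_mul_logDerivHom hx
  have map_const_row : D (x k) = x k * F fun _ => Real.log (x k) := by
    rw [← hD _ (hx k), hφ.eq_mul_logDerivHom fun _ => hx k]
  rw [map_row, map_const_row, F_apply fun l => Real.log (x l), F_apply fun _ => Real.log (x k),
    mul_add, mul_add, ← add_assoc, Finset.mul_sum, Finset.mul_sum, ← Finset.sum_add_distrib]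
  congr 1
  refine Finset.sum_congr rfl fun l _ => ?_
  rw [Real.log_div (hx k).ne' (hx l).ne']
  ring

end IsMonotoneRowDerivation

section Tuples

variable {d m n : ℕ}

lemma tupOK_of_pos {P : Fin d → Fin n → ℝ} (hP : ∀ l i, 0 < P l i) : TupOK P :=
  ⟨fun l i => (hP l i).le, fun l l' i => iff_of_true (hP l i).ne' (hP l' i).ne'⟩

lemma TupOK.comp {P : Fin d → Fin n → ℝ} (hP : TupOK P) (f : Fin m → Fin n) :
    TupOK fun l => P l ∘ f :=
  ⟨fun l i => hP.1 l (f i), fun l l' i => hP.2 l l' (f i)⟩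

lemma TupOK.pos_of_ne_zero {P : Fin d → Fin n → ℝ} (hP : TupOK P) {k : Fin d} {i : Fin n}
    (hi : P k i ≠ 0) (l : Fin d) : 0 < P l i :=
  (hP.1 l i).lt_of_ne' ((hP.2 k l i).mp hi)

lemma TupOK.append {P : Fin d → Fin m → ℝ} {Q : Fin d → Fin n → ℝ} (hP : TupOK P)
    (hQ : TupOK Q) : TupOK fun l => Fin.append (P l) (Q l) := by
  constructor
  · simpa only [Fin.forall_fin_add, Fin.append_left, Fin.append_right] using
      fun l => ⟨hP.1 l, hQ.1 l⟩
  · simpa only [Fin.forall_fin_add, Fin.append_left, Fin.append_right] using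
      fun l l' => ⟨hP.2 l l', hQ.2 l l'⟩

lemma TupOK.snoc_zero {P : Fin d → Fin n → ℝ} (hP : TupOK P) :
    TupOK fun l => (Fin.snoc (P l) 0 : Fin (n + 1) → ℝ) := by
  have h := hP.append (Q := fun _ (_ : Fin 1) => (0 : ℝ))
    ⟨fun _ _ => le_rfl, fun _ _ _ => Iff.rfl⟩
  simpa only [Fin.append_right_eq_snoc] using h

lemma TupOK.kronecker {P : Fin d → Fin m → ℝ} {Q : Fin d → Fin n → ℝ} (hP : TupOK P)
    (hQ : TupOK Q) : TupOK fun l => kronFin (P l) (Q l) :=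
  ⟨fun l _ => mul_nonneg (hP.1 l _) (hQ.1 l _), fun l l' _ => by
    simp only [kronFin, kron, mul_ne_zero_iff, hP.2 l l', hQ.2 l l']⟩

lemma tupMaj_add (x y : Fin d → ℝ) :
    TupMaj (fun l => ![x l, y l]) (fun l (_ : Fin 1) => x l + y l) :=
  ⟨fun _ _ => 1, ⟨fun _ _ => zero_le_one, fun _ => Fin.sum_univ_one _⟩, fun l => by
    funext i
    simp only [matVec, Fin.sum_univ_two, Matrix.cons_val_zero, Matrix.cons_val_one, one_mul,
      Matrix.cons_val_fin_one]⟩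

lemma tupMaj_split_const {s t : ℝ} (hs : 0 < s) (ht : 0 < t) :
    TupMaj (fun (_ : Fin d) (_ : Fin 1) => s + t) (fun _ => ![s, t]) := by
  have hst : s + t ≠ 0 := (add_pos hs ht).ne'
  refine ⟨fun i _ => ![s, t] i / (s + t), ⟨fun i _ => ?_, fun _ => ?_⟩, fun _ => ?_⟩
  · revert i
    exact Fin.forall_fin_two.mpr ⟨by positivity, by positivity⟩
  · rw [← Finset.sum_div, Fin.sum_univ_two]
    exact div_self hst
  · funext i
    rw [matVec, Fin.sum_univ_one, div_mul_cancel₀ _ hst]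

end Tuples

lemma sum_kronFin {m n : ℕ} (p : Fin m → ℝ) (q : Fin n → ℝ) :
    ∑ x, kronFin p q x = (∑ i, p i) * ∑ j, q j := by
  rw [Finset.sum_mul_sum, ← Fintype.sum_prod_type']
  exact Equiv.sum_comp finProdFinEquiv.symm (kron p q)

lemma sum_matVec {ι κ : Type*} [Fintype ι] [Fintype κ] {T : ι → κ → ℝ} (hT : IsStochastic T)
    (v : κ → ℝ) : ∑ i, matVec T v i = ∑ j, v j := by
  simp only [matVec]
  rw [Finset.sum_comm]
  simp only [← Finset.sum_mul, hT.2, one_mul]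

section KullbackLeibler

variable {m n : ℕ}

lemma log_sum_inequality {ι : Type*} (s : Finset ι) {a b : ι → ℝ} (ha : ∀ i ∈ s, 0 ≤ a i)
    (hb : ∀ i ∈ s, 0 ≤ b i) (hab : ∀ i ∈ s, b i = 0 → a i = 0) :
    (∑ i ∈ s, a i) * Real.log ((∑ i ∈ s, a i) / ∑ i ∈ s, b i) ≤
      ∑ i ∈ s, a i * Real.log (a i / b i) := by
  set A := ∑ i ∈ s, a i
  set B := ∑ i ∈ s, b i
  have hA_nonneg : 0 ≤ A := Finset.sum_nonneg ha
  rcases hA_nonneg.eq_or_lt' with hA | hA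
  · rw [hA, zero_mul]
    refine (Finset.sum_eq_zero fun i hi => ?_).ge
    rw [(Finset.sum_eq_zero_iff_of_nonneg ha).mp hA i hi, zero_mul]
  have hB : 0 < B := (Finset.sum_nonneg hb).lt_of_ne' fun hB =>
    hA.ne' <| Finset.sum_eq_zero fun i hi =>
      hab i hi ((Finset.sum_eq_zero_iff_of_nonneg hb).mp hB i hi)
  have tangent_line (i : ι) (hi : i ∈ s) :
      a i * Real.log (A / B) + (a i - b i * (A / B)) ≤ a i * Real.log (a i / b i) := by
    rcases (ha i hi).eq_or_lt' with hai | hai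
    · rw [hai]
      have : 0 ≤ b i * (A / B) := mul_nonneg (hb i hi) (div_pos hA hB).le
      linarith
    have hbi : 0 < b i := (hb i hi).lt_of_ne' fun h => hai.ne' (hab i hi h)
    have hlog := Real.log_le_sub_one_of_pos (div_pos (div_pos hA hB) (div_pos hai hbi))
    rw [Real.log_div (div_pos hA hB).ne' (div_pos hai hbi).ne'] at hlog
    calc a i * Real.log (A / B) + (a i - b i * (A / B))
        = a i * (Real.log (A / B) - ((A / B) / (a i / b i) - 1)) := by field_simp; ring
      _ ≤ a i * Real.log (a i / b i) := mul_le_mul_of_nonneg_left (by linarith) hai.le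
  calc A * Real.log (A / B)
      = ∑ i ∈ s, (a i * Real.log (A / B) + (a i - b i * (A / B))) := by
        rw [Finset.sum_add_distrib, Finset.sum_sub_distrib, ← Finset.sum_mul, ← Finset.sum_mul,
          mul_div_cancel₀ A hB.ne', sub_self, add_zero]
    _ ≤ ∑ i ∈ s, a i * Real.log (a i / b i) := Finset.sum_le_sum tangent_line

lemma KL_matVec_le {T : Fin n → Fin m → ℝ} (hT : IsStochastic T) {p q : Fin m → ℝ}
    (hp : ∀ j, 0 ≤ p j) (hq : ∀ j, 0 ≤ q j) (hpq : ∀ j, q j = 0 → p j = 0) :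
    KL (matVec T p) (matVec T q) ≤ KL p q :=
  calc KL (matVec T p) (matVec T q)
      ≤ ∑ i, ∑ j, T i j * p j * Real.log ((T i j * p j) / (T i j * q j)) :=
        Finset.sum_le_sum fun i _ => log_sum_inequality Finset.univ
          (fun j _ => mul_nonneg (hT.1 i j) (hp j)) (fun j _ => mul_nonneg (hT.1 i j) (hq j))
          fun j _ h => mul_eq_zero.mpr ((mul_eq_zero.mp h).imp_right (hpq j))
    _ = ∑ i, matVec T (fun j => p j * Real.log (p j / q j)) i := by
        refine Finset.sum_congr rfl fun i _ => Finset.sum_congr rfl fun j _ => ?_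
        rcases eq_or_ne (T i j) 0 with h | h
        · simp only [h, zero_mul]
        · rw [mul_div_mul_left _ _ h, mul_assoc]
    _ = KL p q := sum_matVec hT _

lemma KL_kronFin {p q : Fin m → ℝ} {r s : Fin n → ℝ} (hpq : ∀ i, q i = 0 → p i = 0)
    (hrs : ∀ j, s j = 0 → r j = 0) :
    KL (kronFin p r) (kronFin q s) = KL p q * (∑ j, r j) + (∑ i, p i) * KL r s := by
  simp only [KL, ← sum_kronFin, ← Finset.sum_add_distrib]
  refine Finset.sum_congr rfl fun x _ => ?_
  simp only [kronFin, kron]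
  set i := (finProdFinEquiv.symm x).1
  set j := (finProdFinEquiv.symm x).2
  by_cases hi : p i = 0
  · simp only [hi, zero_mul, add_zero]
  by_cases hj : r j = 0
  · simp only [hj, mul_zero, zero_mul, add_zero]
  rw [mul_div_mul_comm, Real.log_mul (div_ne_zero hi (mt (hpq i) hi))
    (div_ne_zero hj (mt (hrs j) hj))]
  ring

end KullbackLeibler

namespace MDeltaBase

section Cone

variable {d : ℕ} {k : Fin d} {Δ Δ' : ∀ n : ℕ, (Fin d → Fin n → ℝ) → ℝ}

lemma congr (h : MDeltaBase k Δ) (heq : ∀ n (P : Fin d → Fin n → ℝ), TupOK P → Δ' n P = Δ n P) :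
    MDeltaBase k Δ' := by
  obtain ⟨hperm, hsnoc, happend, hkron, hmaj⟩ := h
  refine ⟨fun n σ P hP => ?_, fun n P hP => ?_, fun m n P Q hP hQ => ?_, fun m n P Q hP hQ => ?_,
    fun m n P Q hP hQ hPQ => ?_⟩
  · rw [heq _ _ (hP.comp σ), heq _ _ hP, hperm n σ P hP]
  · rw [heq _ _ hP.snoc_zero, heq _ _ hP, hsnoc n P hP]
  · rw [heq _ _ (hP.append hQ), heq _ _ hP, heq _ _ hQ, happend m n P Q hP hQ]
  · rw [heq _ _ (hP.kronecker hQ), heq _ _ hP, heq _ _ hQ, hkron m n P Q hP hQ]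
  · rw [heq _ _ hP, heq _ _ hQ]
    exact hmaj m n P Q hP hQ hPQ

lemma add (h : MDeltaBase k Δ) (h' : MDeltaBase k Δ') : MDeltaBase k (Δ + Δ') := by
  obtain ⟨hperm, hsnoc, happend, hkron, hmaj⟩ := h
  obtain ⟨hperm', hsnoc', happend', hkron', hmaj'⟩ := h'
  refine ⟨fun n σ P hP => ?_, fun n P hP => ?_, fun m n P Q hP hQ => ?_, fun m n P Q hP hQ => ?_,
    fun m n P Q hP hQ hPQ => ?_⟩ <;> simp only [Pi.add_apply]
  · rw [hperm n σ P hP, hperm' n σ P hP]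
  · rw [hsnoc n P hP, hsnoc' n P hP]
  · rw [happend m n P Q hP hQ, happend' m n P Q hP hQ]
    ring
  · rw [hkron m n P Q hP hQ, hkron' m n P Q hP hQ]
    ring
  · exact add_le_add (hmaj m n P Q hP hQ hPQ) (hmaj' m n P Q hP hQ hPQ)

lemma const_smul (h : MDeltaBase k Δ) {c : ℝ} (hc : 0 ≤ c) : MDeltaBase k (c • Δ) := by
  obtain ⟨hperm, hsnoc, happend, hkron, hmaj⟩ := h
  refine ⟨fun n σ P hP => ?_, fun n P hP => ?_, fun m n P Q hP hQ => ?_, fun m n P Q hP hQ => ?_,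
    fun m n P Q hP hQ hPQ => ?_⟩ <;> simp only [Pi.smul_apply, smul_eq_mul]
  · rw [hperm n σ P hP]
  · rw [hsnoc n P hP]
  · rw [happend m n P Q hP hQ]
    ring
  · rw [hkron m n P Q hP hQ]
    ring
  · exact mul_le_mul_of_nonneg_left (hmaj m n P Q hP hQ hPQ) hc

end Cone

variable {d : ℕ}

lemma of_KL (k l : Fin d) : MDeltaBase k (fun _ P => KL (P k) (P l)) := by
  refine ⟨fun n σ P _ => ?_, fun n P _ => ?_, fun m n P Q _ _ => ?_, fun m n P Q hP hQ => ?_, ?_⟩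
  · exact Equiv.sum_comp σ fun i => P k i * Real.log (P k i / P l i)
  · simp only [KL, Fin.sum_univ_castSucc, Fin.snoc_castSucc, Fin.snoc_last, zero_mul,
      add_zero]
  · simp only [KL, Fin.sum_univ_add, Fin.append_left, Fin.append_right]
  · exact KL_kronFin (fun i => (not_iff_not.mp (hP.2 l k i)).mp)
      fun j => (not_iff_not.mp (hQ.2 l k j)).mp
  · rintro m n P Q hP - ⟨T, hT, hTP⟩
    simp only [← hTP]
    exact KL_matVec_le hT (hP.1 k) (hP.1 l) fun i => (not_iff_not.mp (hP.2 l k i)).mp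

lemma of_derivation (k : Fin d) (D : Derivation ℚ ℝ ℝ) :
    MDeltaBase k (fun _ P => D (∑ i, P k i)) := by
  refine ⟨fun n σ P _ => ?_, fun n P _ => ?_, fun m n P Q _ _ => ?_, fun m n P Q _ _ => ?_, ?_⟩
  · exact congrArg D (Equiv.sum_comp σ (P k))
  · simp only [Fin.sum_univ_castSucc, Fin.snoc_castSucc, Fin.snoc_last, add_zero]
  · simp only [Fin.sum_univ_add, Fin.append_left, Fin.append_right, map_add]
  · simp only [sum_kronFin, Derivation.leibniz, smul_eq_mul]
    ring
  · rintro m n P Q - - ⟨T, hT, hTP⟩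
    simp only [← hTP, sum_matVec hT, le_refl]

lemma of_sum_KL_add_derivation {k : Fin d} {γ : Fin d → ℝ} (hγ : ∀ l, l ≠ k → 0 ≤ γ l)
    (D : Derivation ℚ ℝ ℝ) :
    MDeltaBase k (fun _ P =>
      ∑ l ∈ Finset.univ.erase k, γ l * KL (P k) (P l) + D (∑ i, P k i)) := by
  have zero : MDeltaBase k 0 := of_derivation k 0
  have sum_KL := Finset.sum_induction (s := Finset.univ.erase k)
    (fun l => γ l • fun n (P : Fin d → Fin n → ℝ) => KL (P k) (P l)) (MDeltaBase k)
    (fun _ _ => add) zero fun l hl => (of_KL k l).const_smul (hγ l (Finset.ne_of_mem_erase hl))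
  exact (sum_KL.add (of_derivation k D)).congr fun n P _ => by
    simp only [Pi.add_apply, Finset.sum_apply, Pi.smul_apply, smul_eq_mul]

variable {m n : ℕ} {k : Fin d} {Δ : ∀ n : ℕ, (Fin d → Fin n → ℝ) → ℝ}

lemma map_append (h : MDeltaBase k Δ) {P : Fin d → Fin m → ℝ} {Q : Fin d → Fin n → ℝ}
    (hP : TupOK P) (hQ : TupOK Q) :
    Δ (m + n) (fun l => Fin.append (P l) (Q l)) = Δ m P + Δ n Q :=
  h.2.2.1 m n P Q hP hQ

lemma map_kron (h : MDeltaBase k Δ) {P : Fin d → Fin m → ℝ} {Q : Fin d → Fin n → ℝ}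
    (hP : TupOK P) (hQ : TupOK Q) :
    Δ (m * n) (fun l => kronFin (P l) (Q l)) = Δ m P * (∑ j, Q k j) + (∑ i, P k i) * Δ n Q :=
  h.2.2.2.1 m n P Q hP hQ

lemma map_le (h : MDeltaBase k Δ) {P : Fin d → Fin m → ℝ} {Q : Fin d → Fin n → ℝ}
    (hP : TupOK P) (hQ : TupOK Q) (hPQ : TupMaj P Q) : Δ n Q ≤ Δ m P :=
  h.2.2.2.2 m n P Q hP hQ hPQ

lemma eq_sum_rows (h : MDeltaBase k Δ) {P : Fin d → Fin n → ℝ} (hP : TupOK P) :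
    Δ n P = ∑ i, Δ 1 (fun l _ => P l i) := by
  induction n with
  | zero =>
    have h0 := h.map_append hP hP
    rw [show (fun l => Fin.append (P l) (P l)) = P from
      funext fun l => funext fun i => i.elim0] at h0
    rw [Fin.sum_univ_zero]
    exact left_eq_add.mp h0
  | succ n ih =>
    have hinit : TupOK fun l i => P l (Fin.castSucc i) := hP.comp Fin.castSucc
    have hlast : TupOK fun l (_ : Fin 1) => P l (Fin.last n) := hP.comp fun _ => Fin.last n
    have hsnoc := h.map_append hinit hlast
    simp only [Fin.append_right_eq_snoc] at hsnoc
    rw [Fin.sum_univ_castSucc, ← ih hinit, ← hsnoc]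
    congr 1
    exact funext fun l => (Fin.snoc_init_self (P l)).symm

lemma map_zero_row (h : MDeltaBase k Δ) : Δ 1 (fun _ _ => 0) = 0 := by
  have zero_ok : TupOK fun (_ : Fin d) (_ : Fin 1) => (0 : ℝ) :=
    ⟨fun _ _ => le_rfl, fun _ _ _ => Iff.rfl⟩
  calc Δ 1 (fun _ _ => 0)
      = Δ (1 * 1) (fun _ => kronFin (fun _ : Fin 1 => 0) fun _ : Fin 1 => 0) :=
        congrArg (Δ 1) (funext₂ fun _ _ => (mul_zero 0).symm)
    _ = 0 := by
        rw [h.map_kron zero_ok zero_ok]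
        simp only [Finset.sum_const_zero, mul_zero, zero_mul, add_zero]

lemma isMonotoneRowDerivation (h : MDeltaBase k Δ) :
    IsMonotoneRowDerivation k fun x => Δ 1 fun l _ => x l := by
  have row_ok {x : Fin d → ℝ} (hx : ∀ l, 0 < x l) : TupOK fun l (_ : Fin 1) => x l :=
    tupOK_of_pos fun l _ => hx l
  have pair_ok {x y : Fin d → ℝ} (hx : ∀ l, 0 < x l) (hy : ∀ l, 0 < y l) :
      TupOK fun l => ![x l, y l] :=
    tupOK_of_pos fun l => Fin.forall_fin_two.mpr ⟨hx l, hy l⟩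
  have map_pair {x y : Fin d → ℝ} (hx : ∀ l, 0 < x l) (hy : ∀ l, 0 < y l) :
      Δ 2 (fun l => ![x l, y l]) = Δ 1 (fun l _ => x l) + Δ 1 (fun l _ => y l) := by
    rw [h.eq_sum_rows (pair_ok hx hy), Fin.sum_univ_two]
    rfl
  have map_merge_le {x y : Fin d → ℝ} (hx : ∀ l, 0 < x l) (hy : ∀ l, 0 < y l) :
      Δ 1 (fun l _ => x l + y l) ≤ Δ 1 (fun l _ => x l) + Δ 1 (fun l _ => y l) :=
    map_pair hx hy ▸ h.map_le (pair_ok hx hy) (row_ok fun l => add_pos (hx l) (hy l))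
      (tupMaj_add x y)
  refine ⟨fun x y hx hy => ?_, fun x y hx hy => map_merge_le hx hy, fun s t hs ht =>
    (map_merge_le (fun _ => hs) fun _ => ht).antisymm ?_⟩
  · have hmul := h.map_kron (row_ok hx) (row_ok hy)
    simp only [Fin.sum_univ_one] at hmul
    exact hmul
  · rw [← map_pair (fun _ => hs) fun _ => ht]
    exact h.map_le (row_ok fun _ => add_pos hs ht) (pair_ok (fun _ => hs) fun _ => ht)
      (tupMaj_split_const hs ht)

end MDeltaBase

theorem classification_monotone_derivations_matrix_general {d : ℕ} (k : Fin d)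
    (Δ : ∀ n : ℕ, (Fin d → Fin n → ℝ) → ℝ) :
    MDeltaBase k Δ ↔ ∃ (γ : Fin d → ℝ) (D : Derivation ℚ ℝ ℝ), (∀ l, l ≠ k → 0 ≤ γ l) ∧
      ∀ (n : ℕ) (P : Fin d → Fin n → ℝ), TupOK P →
        Δ n P = ∑ l ∈ Finset.univ.erase k, γ l * KL (P k) (P l) + D (∑ i, P k i) := by
  refine ⟨fun h => ?_, fun ⟨γ, D, hγ, hΔ⟩ => (MDeltaBase.of_sum_KL_add_derivation hγ D).congr hΔ⟩
  obtain ⟨γ, D, hγ, hrow⟩ := h.isMonotoneRowDerivation.exists_eq_sum_log_add_derivation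
  refine ⟨γ, D, hγ, fun n P hP => ?_⟩
  have row_apply (i : Fin n) : Δ 1 (fun l _ => P l i) =
      ∑ l ∈ Finset.univ.erase k, γ l * (P k i * Real.log (P k i / P l i)) + D (P k i) := by
    by_cases hi : P k i = 0
    · have hzero (l : Fin d) : P l i = 0 := (not_iff_not.mp (hP.2 k l i)).mp hi
      simp only [hzero, h.map_zero_row, zero_mul, mul_zero, Finset.sum_const_zero, map_zero,
        add_zero]
    · exact hrow (fun l => P l i) (hP.pos_of_ne_zero hi)
  simp only [h.eq_sum_rows hP, row_apply, KL, Finset.mul_sum, Finset.sum_add_distrib, map_sum]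
  rw [Finset.sum_comm]

/-- **Classification of monotone derivations on the matrix majorization
semiring.**  A monotone derivation at the `k`-th column normalization is a
nonnegative combination `Σ_{ℓ≠k} γ_ℓ D₁(p⁽ᵏ⁾‖p⁽ˡ⁾)` of Kullback–Leibler
divergences on all tuples whose `k`-th column has rational total sum;
conversely every such combination has all the listed properties. -/
theorem classification_monotone_derivations_matrix
    {d : ℕ} (hd : 1 ≤ d) (k : Fin d) :
    (∀ Δ : ∀ n : ℕ, (Fin d → Fin n → ℝ) → ℝ, MDeltaBase k Δ →
      ∃ γ : Fin d → ℝ, (∀ l, l ≠ k → 0 ≤ γ l) ∧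
        ∀ (n : ℕ) (P : Fin d → Fin n → ℝ), TupOK P →
          (∃ a : ℚ, (∑ i, P k i) = a) →
          Δ n P = ∑ l ∈ Finset.univ.erase k, γ l * KL (P k) (P l)) ∧
    (∀ γ : Fin d → ℝ, (∀ l, l ≠ k → 0 ≤ γ l) →
      MDeltaBase k (fun n P => ∑ l ∈ Finset.univ.erase k, γ l * KL (P k) (P l))) := by
  refine ⟨fun Δ hΔ => ?_, fun γ hγ => ?_⟩
  · obtain ⟨γ, D, hγ, h⟩ := (classification_monotone_derivations_matrix_general k Δ).mp hΔ
    exact ⟨γ, hγ, fun n P hP ⟨a, ha⟩ => by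
      rw [h n P hP, ha, ← eq_ratCast (algebraMap ℚ ℝ), D.map_algebraMap, add_zero]⟩
  · exact (classification_monotone_derivations_matrix_general k _).mpr
      ⟨γ, 0, hγ, fun _ _ _ => (add_zero _).symm⟩
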